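/- Let G = ⟨a, b ∣ aba = bab⟩ be the trefoil knot group, let φ₅ : G → ℤ/5ℤ be the homomorphism sending both generators a and b to 1, let U₅ = ker φ₅, and let M₅ be the normal closure in G of {a⁵}. Then M₅ ≤ U₅ and the quotient group U₅/M₅ is isomorphic to SL(2, ℤ/5ℤ), the group of 2×2 matrices of determinant 1 over the field with five elements. -/

import Mathlib

/-- The single relator `aba(bab)⁻¹` of the trefoil knot group, with `a = of true`,
`b = of false`. -/
def trefoilRels : Set (FreeGroup Bool) :=
  {FreeGroup.of true * FreeGroup.of false * FreeGroup.of true *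
    (FreeGroup.of false * FreeGroup.of true * FreeGroup.of false)⁻¹}

/-- The trefoil knot group `⟨a, b ∣ aba = bab⟩`. -/
abbrev TrefoilGroup := PresentedGroup trefoilRels

open scoped MatrixGroups

section CosetEnumeration

variable {Γ : Type*} [Group Γ]

/-- Representatives of the left cosets of `⟨a, (aba)²⟩` in a group generated by elements `a`, `b`
with `aba = bab` and `a⁵ = 1`. -/
def cosetRep (a b : Γ) : Fin 12 → Γ :=
  ![1, b, a * b, a ^ 2 * b, a ^ 3 * b, a ^ 4 * b,
    b ^ 2, a * b ^ 2, a ^ 2 * b ^ 2, a ^ 3 * b ^ 2, a ^ 4 * b ^ 2, b * a ^ 4 * b ^ 2]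

/-- The elements covered by the cosets of `cosetRep`. -/
def IsCovered (a b g : Γ) : Prop :=
  ∃ (i : Fin 12) (k l : ℕ), g = cosetRep a b i * a ^ k * ((a * b * a) ^ 2) ^ l

theorem map_cosetRep {Γ' : Type*} [Group Γ'] (f : Γ →* Γ') (a b : Γ) (i : Fin 12) :
    f (cosetRep a b i) = cosetRep (f a) (f b) i := by
  fin_cases i <;> simp [cosetRep]

variable {a b : Γ}

theorem commute_left_sq_garside (h : a * b * a = b * a * b) : Commute a ((a * b * a) ^ 2) := by
  have h₁ : SemiconjBy (a * b * a) a b := by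
    rw [SemiconjBy]; nth_rw 1 [h]; simp only [mul_assoc]
  have h₂ : SemiconjBy (a * b * a) b a := by
    simp only [SemiconjBy, mul_assoc] at h ⊢; rw [h]
  rw [pow_two]
  exact (h₂.mul_left h₁).symm

theorem commute_right_sq_garside (h : a * b * a = b * a * b) : Commute b ((a * b * a) ^ 2) := by
  rw [h]; exact commute_left_sq_garside h.symm

theorem inv_mul_mul_eq (h : a * b * a = b * a * b) : b⁻¹ * a * b = a * b * a⁻¹ := by
  rw [eq_mul_inv_iff_mul_eq, mul_assoc, mul_assoc, inv_mul_eq_iff_eq_mul]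
  simpa only [mul_assoc] using h

theorem IsCovered.mul_right {g : Γ} (h : a * b * a = b * a * b) (hg : IsCovered a b g) (k l : ℕ) :
    IsCovered a b (g * a ^ k * ((a * b * a) ^ 2) ^ l) := by
  obtain ⟨i, k', l', rfl⟩ := hg
  refine ⟨i, k' + k, l' + l, ?_⟩
  have := ((commute_left_sq_garside h).pow_pow k l').eq
  generalize (a * b * a) ^ 2 = z at *
  rw [pow_add, pow_add, mul_assoc (cosetRep a b i * a ^ k'), ← this]
  simp only [mul_assoc]

theorem isCovered_mul_of_forall (h : a * b * a = b * a * b) {x g : Γ}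
    (hx : ∀ i, IsCovered a b (x * cosetRep a b i)) (hg : IsCovered a b g) :
    IsCovered a b (x * g) := by
  obtain ⟨i, k, l, rfl⟩ := hg
  simpa only [mul_assoc] using (hx i).mul_right h k l

theorem mul_sq_mul (h : a * b * a = b * a * b) (h5 : a ^ 5 = 1) :
    b * a ^ 2 * b = a ^ 3 * (a * b * a) ^ 2 := by
  have e : b * a ^ 2 * b * a ^ 2 = (a * b * a) ^ 2 := by
    calc b * a ^ 2 * b * a ^ 2 = b * a * (a * b * a) * a := by simp only [pow_two, mul_assoc]
      _ = b * a * b * (a * b * a) := by nth_rw 1 [h]; simp only [mul_assoc]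
      _ = (a * b * a) ^ 2 := by rw [← h, pow_two]
  have e5 : a ^ 2 * a ^ 3 = 1 := by rw [← pow_add, h5]
  rw [((commute_left_sq_garside h).pow_left 3).eq, ← e, mul_assoc _ (a ^ 2) (a ^ 3), e5, mul_one]

theorem inv_eq_pow_four (h5 : a ^ 5 = 1) : a⁻¹ = a ^ 4 :=
  inv_eq_of_mul_eq_one_right (by rw [← pow_succ', h5])

theorem mul_pow_three_mul (h : a * b * a = b * a * b) (h5 : a ^ 5 = 1) :
    b * a ^ 3 * b = a ^ 4 * b * a ^ 4 * (a * b * a) ^ 2 := by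
  calc b * a ^ 3 * b = (b * a ^ 2 * b) * (b⁻¹ * a * b) := by group
    _ = a ^ 3 * (a * b * a) ^ 2 * (a * b * a⁻¹) := by rw [mul_sq_mul h h5, inv_mul_mul_eq h]
    _ = a ^ 3 * (a * b * a⁻¹) * (a * b * a) ^ 2 := by
      have : Commute (a * b * a⁻¹) ((a * b * a) ^ 2) :=
        ((commute_left_sq_garside h).mul_left (commute_right_sq_garside h)).mul_left
          (commute_left_sq_garside h).inv_left
      rw [mul_assoc, ← this.eq, ← mul_assoc]
    _ = _ := by rw [inv_eq_pow_four h5]; simp only [pow_succ, pow_zero, one_mul, mul_assoc]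

theorem mul_pow_four_mul (h : a * b * a = b * a * b) (h5 : a ^ 5 = 1) :
    b * a ^ 4 * b = a ^ 4 * b ^ 2 * a ^ 4 * (a * b * a) ^ 2 := by
  calc b * a ^ 4 * b = (b * a ^ 3 * b) * (b⁻¹ * a * b) := by group
    _ = a ^ 4 * b * a⁻¹ * (a * b * a) ^ 2 * (a * b * a⁻¹) := by
      rw [mul_pow_three_mul h h5, inv_mul_mul_eq h, inv_eq_pow_four h5]
    _ = a ^ 4 * b * a⁻¹ * (a * b * a⁻¹) * (a * b * a) ^ 2 := by
      have : Commute (a * b * a⁻¹) ((a * b * a) ^ 2) :=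
        ((commute_left_sq_garside h).mul_left (commute_right_sq_garside h)).mul_left
          (commute_left_sq_garside h).inv_left
      rw [mul_assoc, ← this.eq, ← mul_assoc]
    _ = a ^ 4 * b ^ 2 * a⁻¹ * (a * b * a) ^ 2 := by simp [pow_succ, mul_assoc]
    _ = _ := by rw [inv_eq_pow_four h5]

/-- The element `b * a ^ 4 * b ^ 2` inverts `a` up to a central factor. -/
theorem mul_mul_pow_four_mul_sq (h : a * b * a = b * a * b) (h5 : a ^ 5 = 1) :
    a * (b * a ^ 4 * b ^ 2) = b * a ^ 4 * b ^ 2 * a ^ 4 * ((a * b * a) ^ 2) ^ 2 := by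
  have e4 := mul_pow_four_mul h h5
  have hb := commute_right_sq_garside h
  generalize (a * b * a) ^ 2 = z at *
  have e : b * a ^ 4 * b ^ 2 = a ^ 4 * (b * a ^ 4 * b ^ 2) * a ^ 4 * z ^ 2 := by
    calc b * a ^ 4 * b ^ 2 = (b * a ^ 4 * b) * b := by simp only [pow_two, mul_assoc]
      _ = a ^ 4 * b ^ 2 * a ^ 4 * (z * b) := by rw [e4]; simp only [mul_assoc]
      _ = a ^ 4 * b * (b * a ^ 4 * b) * z := by rw [← hb.eq]; simp only [pow_two, mul_assoc]
      _ = a ^ 4 * (b * a ^ 4 * b ^ 2) * a ^ 4 * z ^ 2 := by rw [e4]; simp only [pow_two, mul_assoc]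
  calc a * (b * a ^ 4 * b ^ 2) = a * (a ^ 4 * (b * a ^ 4 * b ^ 2) * a ^ 4 * z ^ 2) := by rw [← e]
    _ = a ^ 5 * (b * a ^ 4 * b ^ 2 * a ^ 4 * z ^ 2) := by group
    _ = _ := by rw [h5, one_mul]

theorem sq_garside_pow_ten (h : a * b * a = b * a * b) (h5 : a ^ 5 = 1) :
    ((a * b * a) ^ 2) ^ 10 = 1 := by
  have e := mul_mul_pow_four_mul_sq h h5
  have ha := commute_left_sq_garside h
  generalize (a * b * a) ^ 2 = z at *
  have hs : SemiconjBy (b * a ^ 4 * b ^ 2) (a ^ 4 * z ^ 2) a := by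
    rw [SemiconjBy, e, mul_assoc _ (a ^ 4) (z ^ 2)]
  have := (hs.pow_right 5).eq
  rw [(ha.pow_pow 4 2).mul_pow, h5, one_mul, ← pow_mul, ← pow_mul, mul_comm 4 5, pow_mul, h5,
    one_pow, one_mul] at this
  simpa using this

theorem pow_five_right (h : a * b * a = b * a * b) (h5 : a ^ 5 = 1) : b ^ 5 = 1 := by
  have : SemiconjBy (a * b) a b := by rw [SemiconjBy, h, mul_assoc]
  have := (this.pow_right 5).eq
  rw [h5, mul_one] at this
  simpa using this

theorem isCovered_left_mul_cosetRep (h : a * b * a = b * a * b) (h5 : a ^ 5 = 1) (i : Fin 12) :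
    IsCovered a b (a * cosetRep a b i) := by
  have ht := mul_mul_pow_four_mul_sq h h5
  fin_cases i
  · exact ⟨0, 1, 0, by simp [cosetRep]⟩
  · exact ⟨2, 0, 0, by simp [cosetRep]⟩
  · exact ⟨3, 0, 0, by simp [cosetRep, pow_succ, mul_assoc]⟩
  · exact ⟨4, 0, 0, by simp [cosetRep, pow_succ, mul_assoc]⟩
  · exact ⟨5, 0, 0, by simp [cosetRep, pow_succ, mul_assoc]⟩
  · exact ⟨1, 0, 0, by simp [cosetRep, ← mul_assoc, ← pow_succ', h5]⟩
  · exact ⟨7, 0, 0, by simp [cosetRep]⟩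
  · exact ⟨8, 0, 0, by simp [cosetRep, pow_succ, mul_assoc]⟩
  · exact ⟨9, 0, 0, by simp [cosetRep, pow_succ, mul_assoc]⟩
  · exact ⟨10, 0, 0, by simp [cosetRep, pow_succ, mul_assoc]⟩
  · exact ⟨6, 0, 0, by simp [cosetRep, ← mul_assoc, ← pow_succ', h5]⟩
  · exact ⟨11, 4, 2, ht⟩

theorem isCovered_right_mul_cosetRep (h : a * b * a = b * a * b) (h5 : a ^ 5 = 1) (i : Fin 12) :
    IsCovered a b (b * cosetRep a b i) := by
  have e2 := mul_sq_mul h h5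
  have e3 := mul_pow_three_mul h h5
  have e4 := mul_pow_four_mul h h5
  have hz := sq_garside_pow_ten h h5
  have hb5 := pow_five_right h h5
  have ha := commute_left_sq_garside h
  have hb := commute_right_sq_garside h
  have d2 := mul_sq_mul h.symm hb5
  rw [← h] at d2
  simp only [IsCovered]
  generalize (a * b * a) ^ 2 = z at *
  have hz9 : z⁻¹ = z ^ 9 := inv_eq_of_mul_eq_one_right (by rw [← pow_succ', hz])
  have e22 : b * (a ^ 2 * b ^ 2) = a ^ 3 * b * z := by
    rw [pow_two b, ← mul_assoc, ← mul_assoc, e2, mul_assoc, ← hb.eq, mul_assoc]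
  have e32 : b * (a ^ 3 * b ^ 2) = a ^ 3 * b ^ 2 * a ^ 4 * z ^ 2 := by
    calc b * (a ^ 3 * b ^ 2) = (b * a ^ 3 * b) * b := by simp only [pow_two, mul_assoc]
      _ = a ^ 4 * b * a ^ 4 * (z * b) := by rw [e3]; simp only [mul_assoc]
      _ = a ^ 4 * (b * a ^ 4 * b) * z := by rw [← hb.eq]; simp only [mul_assoc]
      _ = a ^ 5 * (a ^ 3 * b ^ 2 * a ^ 4 * z ^ 2) := by rw [e4]; simp [pow_succ, mul_assoc]
      _ = _ := by rw [h5, one_mul]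
  fin_cases i
  · exact ⟨1, 0, 0, by simp [cosetRep]⟩
  · exact ⟨6, 0, 0, by simp [cosetRep, pow_two]⟩
  · exact ⟨2, 1, 0, by simp [cosetRep, h, mul_assoc]⟩
  · exact ⟨0, 3, 1, by simp [cosetRep, ← e2, mul_assoc]⟩
  · exact ⟨5, 4, 1, by simpa [cosetRep, mul_assoc] using e3⟩
  · exact ⟨10, 4, 1, by simpa [cosetRep, mul_assoc] using e4⟩
  · refine ⟨7, 1, 9, ?_⟩
    change b * b ^ 2 = a * b ^ 2 * a ^ 1 * z ^ 9
    rw [← hz9, pow_one, d2, mul_inv_cancel_right, pow_succ' b 2]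
  · refine ⟨3, 1, 0, ?_⟩
    calc b * (a * b ^ 2) = (b * a * b) * b := by simp only [pow_two, mul_assoc]
      _ = a * (b * a * b) := by rw [← h]; simp only [mul_assoc] at h ⊢; rw [h]
      _ = a ^ 2 * b * a ^ 1 * z ^ 0 := by rw [← h]; simp [pow_two, mul_assoc]
  · exact ⟨4, 0, 1, by simpa [cosetRep] using e22⟩
  · exact ⟨9, 4, 2, by simpa [cosetRep] using e32⟩
  · exact ⟨11, 0, 0, by simp [cosetRep, mul_assoc]⟩
  · refine ⟨8, 2, 7, ?_⟩
    change b * (b * a ^ 4 * b ^ 2) = a ^ 2 * b ^ 2 * a ^ 2 * z ^ 7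
    have haz : z * a ^ 4 = a ^ 4 * z := (ha.pow_left 4).eq.symm
    have e : a ^ 2 * b ^ 2 = b * (b * a ^ 4 * b ^ 2) * a ^ 8 * z ^ 3 := by
      calc a ^ 2 * b ^ 2 = b ^ 5 * (a ^ 2 * b ^ 2) := by rw [hb5, one_mul]
        _ = b ^ 4 * (b * (a ^ 2 * b ^ 2)) := by rw [← mul_assoc (b ^ 4), ← pow_succ]
        _ = b ^ 3 * (b * a ^ 3 * b) * z := by rw [e22]; simp only [pow_succ b 3, mul_assoc]
        _ = b ^ 2 * (b * a ^ 4 * b) * a ^ 4 * z ^ 2 := by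
          rw [e3]; simp only [pow_succ b 2, pow_two z, mul_assoc]
        _ = b ^ 2 * a ^ 4 * b ^ 2 * a ^ 4 * (z * a ^ 4) * z ^ 2 := by
          rw [e4]; simp only [mul_assoc]
        _ = _ := by
          rw [haz, pow_add a 4 4, pow_succ' z 2, pow_two b]; simp only [mul_assoc]
    have haz3 : z ^ 3 * a ^ 2 = a ^ 2 * z ^ 3 := (ha.pow_pow 2 3).eq.symm
    have h10 : a ^ 10 = 1 := by rw [pow_mul a 5 2, h5, one_pow]
    calc b * (b * a ^ 4 * b ^ 2)
        = b * (b * a ^ 4 * b ^ 2) * a ^ (8 + 2) * z ^ (3 + 7) := by simp [h10, hz]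
      _ = b * (b * a ^ 4 * b ^ 2) * a ^ 8 * (a ^ 2 * z ^ 3) * z ^ 7 := by
        simp only [pow_add, mul_assoc]
      _ = _ := by rw [e, ← haz3]; simp only [mul_assoc]

theorem isCovered_of_closure_eq_top (h : a * b * a = b * a * b) (h5 : a ^ 5 = 1)
    (hab : Subgroup.closure {a, b} = ⊤) (g : Γ) : IsCovered a b g := by
  have hg : g ∈ Subgroup.closure {a, b} := hab ▸ Subgroup.mem_top g
  have hA {y : Γ} := isCovered_mul_of_forall (g := y) h (isCovered_left_mul_cosetRep h h5)
  have hB {y : Γ} := isCovered_mul_of_forall (g := y) h (isCovered_right_mul_cosetRep h h5)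
  induction hg using Subgroup.closure_induction_left with
  | one => exact ⟨0, 0, 0, by simp [cosetRep]⟩
  | mul_left x hx y _ hy =>
    rcases hx with rfl | rfl
    exacts [hA hy, hB hy]
  | inv_mul_cancel x hx y _ hy =>
    rcases hx with rfl | rfl
    · rw [inv_eq_pow_four h5]
      simpa only [pow_succ, pow_zero, one_mul, mul_assoc] using hA (hA (hA (hA hy)))
    · rw [inv_eq_pow_four (pow_five_right h h5)]
      simpa only [pow_succ, pow_zero, one_mul, mul_assoc] using hB (hB (hB (hB hy)))

theorem exists_eq_cosetRep_mul (h : a * b * a = b * a * b) (h5 : a ^ 5 = 1)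
    (hab : Subgroup.closure {a, b} = ⊤) (g : Γ) :
    ∃ (i : Fin 12) (k : Fin 5) (l : Fin 10),
      g = cosetRep a b i * a ^ (k : ℕ) * ((a * b * a) ^ 2) ^ (l : ℕ) := by
  obtain ⟨i, k, l, rfl⟩ := isCovered_of_closure_eq_top h h5 hab g
  refine ⟨i, ⟨k % 5, Nat.mod_lt _ (by norm_num)⟩, ⟨l % 10, Nat.mod_lt _ (by norm_num)⟩, ?_⟩
  rw [← pow_eq_pow_mod k h5, ← pow_eq_pow_mod l (sq_garside_pow_ten h h5)]

end CosetEnumeration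

/-- The transvection `[1, x; 0, 1]`. -/
def upperTransvection (x : ZMod 5) : SL(2, ZMod 5) := ⟨!![1, x; 0, 1], by simp⟩

/-- The transvection `[1, 0; x, 1]`. -/
def lowerTransvection (x : ZMod 5) : SL(2, ZMod 5) := ⟨!![1, 0; x, 1], by simp⟩

theorem coe_upperTransvection (x : ZMod 5) :
    (upperTransvection x : Matrix (Fin 2) (Fin 2) (ZMod 5)) = !![1, x; 0, 1] := rfl

theorem coe_lowerTransvection (x : ZMod 5) :
    (lowerTransvection x : Matrix (Fin 2) (Fin 2) (ZMod 5)) = !![1, 0; x, 1] := rfl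

theorem upperTransvection_pow (x : ZMod 5) (n : ℕ) :
    upperTransvection x ^ n = upperTransvection (n * x) := by
  induction n with
  | zero => ext i j; fin_cases i <;> fin_cases j <;> simp [coe_upperTransvection]
  | succ n ih =>
    rw [pow_succ, ih]
    apply Subtype.ext
    simp [coe_upperTransvection, add_mul, add_comm]

theorem lowerTransvection_pow (x : ZMod 5) (n : ℕ) :
    lowerTransvection x ^ n = lowerTransvection (n * x) := by
  induction n with
  | zero => ext i j; fin_cases i <;> fin_cases j <;> simp [coe_lowerTransvection]
  | succ n ih =>
    rw [pow_succ, ih]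
    apply Subtype.ext
    simp [coe_lowerTransvection, add_mul]

theorem mem_of_transvections_mem {H : Subgroup SL(2, ZMod 5)} (hA : upperTransvection 1 ∈ H)
    (hB : lowerTransvection (-1) ∈ H) (g : SL(2, ZMod 5)) : g ∈ H := by
  have hU (x) : upperTransvection x ∈ H := by
    simpa [upperTransvection_pow] using H.pow_mem hA x.val
  have hL (x) : lowerTransvection x ∈ H := by
    simpa [lowerTransvection_pow] using H.pow_mem hB (-x).val
  have : Fact (Nat.Prime 5) := ⟨by norm_num⟩
  have key (g : SL(2, ZMod 5)) (hc : g 1 0 ≠ 0) : g ∈ H := by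
    have e : g = upperTransvection ((g 0 0 - 1) / g 1 0) * lowerTransvection (g 1 0) *
        upperTransvection ((g 1 1 - 1) / g 1 0) := by
      have hd := g.det_coe
      rw [Matrix.det_fin_two] at hd
      apply Subtype.ext
      simp only [Matrix.SpecialLinearGroup.coe_mul, coe_upperTransvection, coe_lowerTransvection,
        Matrix.mul_fin_two]
      conv_lhs => rw [Matrix.eta_fin_two g.1]
      generalize g 0 0 = p, g 0 1 = q, g 1 0 = r, g 1 1 = s at *
      ext i j
      fin_cases i <;> fin_cases j <;> simp <;> field_simp
      · ring
      · linear_combination -hd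
      · ring
    rw [e]
    exact H.mul_mem (H.mul_mem (hU _) (hL _)) (hU _)
  by_cases hc : g 1 0 = 0
  · refine (H.mul_mem_cancel_right hB).mp (key _ ?_)
    have hd := g.det_coe
    rw [Matrix.det_fin_two, hc, mul_zero, sub_zero] at hd
    have : g 1 1 ≠ 0 := right_ne_zero_of_mul_eq_one hd
    rw [Matrix.SpecialLinearGroup.coe_mul, coe_lowerTransvection, Matrix.mul_apply,
      Fin.sum_univ_two]
    simpa [hc] using this
  · exact key g hc

/-- The representation of the trefoil group on `(ℤ/5ℤ)²` sending the two generators to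
transvections. -/
def trefoilToSL : TrefoilGroup →* SL(2, ZMod 5) :=
  PresentedGroup.toGroup
    (f := fun i ↦ if i then upperTransvection 1 else lowerTransvection (-1)) (by
      rintro r rfl
      simp only [map_mul, map_inv, FreeGroup.lift_apply_of, if_true]
      decide)

theorem trefoilToSL_true : trefoilToSL (.of true) = upperTransvection 1 := by
  simp [trefoilToSL]

theorem trefoilToSL_false : trefoilToSL (.of false) = lowerTransvection (-1) := by
  simp [trefoilToSL]

theorem trefoil_relation : (PresentedGroup.of true * .of false * .of true : TrefoilGroup) =
    .of false * .of true * .of false := by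
  have h : PresentedGroup.mk trefoilRels _ = 1 := PresentedGroup.one_of_mem rfl
  simp only [map_mul, map_inv, mul_inv_eq_one] at h
  exact h

theorem sq_garside_transvections :
    (upperTransvection 1 * lowerTransvection (-1) * upperTransvection 1) ^ 2 = -1 := by
  apply Subtype.ext
  simp only [Matrix.SpecialLinearGroup.coe_mul,
    Matrix.SpecialLinearGroup.coe_neg, Matrix.SpecialLinearGroup.coe_one, coe_upperTransvection,
    coe_lowerTransvection, pow_two, Matrix.mul_fin_two, Matrix.one_fin_two]
  simp

theorem cosetRep_transvections (i : Fin 12) :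
    cosetRep (upperTransvection 1) (lowerTransvection (-1)) i =
      ![1, lowerTransvection 4, upperTransvection 1 * lowerTransvection 4,
        upperTransvection 2 * lowerTransvection 4, upperTransvection 3 * lowerTransvection 4,
        upperTransvection 4 * lowerTransvection 4, lowerTransvection 3,
        upperTransvection 1 * lowerTransvection 3, upperTransvection 2 * lowerTransvection 3,
        upperTransvection 3 * lowerTransvection 3, upperTransvection 4 * lowerTransvection 3,
        lowerTransvection 4 * upperTransvection 4 * lowerTransvection 3] i := by
  have h₁ : (-1 : ZMod 5) = 4 := rfl
  have h₂ : (2 * 4 : ZMod 5) = 3 := rfl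
  fin_cases i <;> simp [cosetRep, upperTransvection_pow, lowerTransvection_pow, h₁, h₂]

theorem eq_zero_of_cosetRep_mul_eq_one_or {i : Fin 12} {x : ZMod 5}
    (h : cosetRep (upperTransvection 1) (lowerTransvection (-1)) i * upperTransvection x = 1 ∨
      cosetRep (upperTransvection 1) (lowerTransvection (-1)) i * upperTransvection x = -1) :
    i = 0 ∧ x = 0 := by
  rw [cosetRep_transvections] at h
  replace h := h.imp (congrArg Subtype.val) (congrArg Subtype.val)
  fin_cases i <;>
    simp [coe_upperTransvection, coe_lowerTransvection, Matrix.one_fin_two] at h ⊢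
  all_goals revert h x; decide

theorem eq_zero_of_cosetRep_mul_eq_one {i : Fin 12} {k : Fin 5} {l : Fin 10}
    (h : cosetRep (upperTransvection 1) (lowerTransvection (-1)) i *
        upperTransvection 1 ^ (k : ℕ) *
        ((upperTransvection 1 * lowerTransvection (-1) * upperTransvection 1) ^ 2) ^ (l : ℕ) = 1)
    (h' : cosetRep (Multiplicative.ofAdd (1 : ZMod 5)) (.ofAdd 1) i * .ofAdd 1 ^ (k : ℕ) *
        ((.ofAdd 1 * .ofAdd 1 * .ofAdd 1) ^ 2) ^ (l : ℕ) = 1) :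
    i = 0 ∧ k = 0 ∧ l = 0 := by
  rw [sq_garside_transvections] at h
  rw [upperTransvection_pow, mul_one] at h
  have hik : i = 0 ∧ ((k : ℕ) : ZMod 5) = 0 := by
    refine eq_zero_of_cosetRep_mul_eq_one_or ?_
    rcases neg_one_pow_eq_or SL(2, ZMod 5) (l : ℕ) with e | e <;> rw [e] at h
    · exact .inl (by rwa [mul_one] at h)
    · exact .inr (by rwa [mul_neg_one, neg_eq_iff_eq_neg] at h)
  obtain ⟨rfl, hk⟩ := hik
  obtain rfl : k = 0 := by revert hk; clear h h'; revert k; decide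
  refine ⟨rfl, rfl, ?_⟩
  have hl : Even (l : ℕ) := by
    by_contra hl
    rw [Nat.not_even_iff_odd] at hl
    rw [hl.neg_one_pow] at h
    revert h
    decide
  clear h
  revert l
  decide

/-- With `φ₅ : G → ℤ/5ℤ` sending both generators to `1`, `U₅ = ker φ₅`
and `M₅` the normal closure of `{a⁵}`, we have `M₅ ≤ U₅` and `U₅/M₅ ≅ SL(2, ℤ/5ℤ)`. -/
theorem statement10 (φ : TrefoilGroup →* Multiplicative (ZMod 5))
    (hφa : φ (PresentedGroup.of true) = Multiplicative.ofAdd 1)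
    (hφb : φ (PresentedGroup.of false) = Multiplicative.ofAdd 1) :
    Subgroup.normalClosure {(PresentedGroup.of true : TrefoilGroup) ^ 5} ≤ φ.ker ∧
    Nonempty
      ((↥φ.ker ⧸ (Subgroup.normalClosure
          {(PresentedGroup.of true : TrefoilGroup) ^ 5}).subgroupOf φ.ker)
        ≃* Matrix.SpecialLinearGroup (Fin 2) (ZMod 5)) := by
  have hA : upperTransvection 1 ^ 5 = 1 := by
    rw [upperTransvection_pow, mul_one]
    decide
  set a : TrefoilGroup := PresentedGroup.of true with ha
  set b : TrefoilGroup := PresentedGroup.of false with hb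
  set M := Subgroup.normalClosure {a ^ 5} with hM
  have hMφ : M ≤ φ.ker := Subgroup.normalClosure_le_normal <| by
    rw [Set.singleton_subset_iff, SetLike.mem_coe, MonoidHom.mem_ker, map_pow, hφa]; decide
  have hMψ : M ≤ trefoilToSL.ker := Subgroup.normalClosure_le_normal <| by
    rw [Set.singleton_subset_iff, SetLike.mem_coe, MonoidHom.mem_ker, map_pow, ha,
      trefoilToSL_true, hA]
  have hinj (g : TrefoilGroup) (h₁ : φ g = 1) (h₂ : trefoilToSL g = 1) : g ∈ M := by
    have hrel := congrArg (QuotientGroup.mk' M) trefoil_relation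
    simp only [map_mul, ← ha, ← hb] at hrel
    have h5 : QuotientGroup.mk' M a ^ 5 = 1 := by
      rw [← map_pow, ← MonoidHom.mem_ker, QuotientGroup.ker_mk']
      exact Subgroup.subset_normalClosure rfl
    have hgen : Subgroup.closure {QuotientGroup.mk' M a, QuotientGroup.mk' M b} = ⊤ := by
      rw [← Set.image_pair, ← MonoidHom.map_closure]
      have : ({a, b} : Set TrefoilGroup) = Set.range PresentedGroup.of := by
        ext x; simp [ha, hb, or_comm]
      rw [this, PresentedGroup.closure_range_of, ← MonoidHom.range_eq_map,
        MonoidHom.range_eq_top]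
      exact QuotientGroup.mk'_surjective M
    obtain ⟨i, k, l, e⟩ := exists_eq_cosetRep_mul hrel h5 hgen (QuotientGroup.mk' M g)
    have e₁ := congrArg (QuotientGroup.lift M φ hMφ) e
    have e₂ := congrArg (QuotientGroup.lift M trefoilToSL hMψ) e
    simp only [map_mul, map_pow, map_cosetRep, QuotientGroup.mk'_apply, QuotientGroup.lift_mk,
      h₁, h₂, hφa, hφb] at e₁ e₂
    rw [ha, hb, trefoilToSL_true, trefoilToSL_false] at e₂
    obtain ⟨rfl, rfl, rfl⟩ := eq_zero_of_cosetRep_mul_eq_one e₂.symm e₁.symm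
    rw [← QuotientGroup.eq_one_iff]
    simpa [cosetRep] using e
  refine ⟨hMφ, ⟨?_⟩⟩
  let ψ : φ.ker →* SL(2, ZMod 5) := trefoilToSL.comp φ.ker.subtype
  have hker : ψ.ker = M.subgroupOf φ.ker := by
    ext ⟨g, hg⟩
    exact ⟨hinj g hg, fun h ↦ hMψ h⟩
  have hmem (x : TrefoilGroup) (hx : φ x = .ofAdd 1) (hx' : trefoilToSL x ^ 5 = 1) :
      trefoilToSL x ∈ ψ.range := by
    have hz : φ ((a * b * a) ^ 2) = .ofAdd 1 := by simp only [map_pow, map_mul, hφa, hφb]; decide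
    have hz' : trefoilToSL ((a * b * a) ^ 2) ^ 6 = 1 := by
      simp only [map_pow, map_mul, ha, hb, trefoilToSL_true, trefoilToSL_false,
        sq_garside_transvections]
      exact Even.neg_one_pow (by decide)
    refine ⟨⟨x ^ 6 * ((a * b * a) ^ 2) ^ (-6 : ℤ), ?_⟩, ?_⟩
    · rw [MonoidHom.mem_ker, map_mul, map_pow, map_zpow, hx, hz]; decide
    · change trefoilToSL (x ^ 6 * ((a * b * a) ^ 2) ^ (-6 : ℤ)) = _
      rw [map_mul, map_pow, map_zpow, zpow_neg, pow_succ, hx', one_mul]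
      norm_cast
      rw [hz', inv_one, mul_one]
  have hsurj : Function.Surjective ψ := MonoidHom.range_eq_top.mp <| top_unique fun g _ ↦
    mem_of_transvections_mem
      (trefoilToSL_true ▸ hmem a hφa (by rw [ha, trefoilToSL_true, hA]))
      (trefoilToSL_false ▸ hmem b hφb (by
        rw [hb, trefoilToSL_false, lowerTransvection_pow]; decide)) g
  exact (QuotientGroup.quotientMulEquivOfEq hker.symm).trans
    (QuotientGroup.quotientKerEquivOfSurjective ψ hsurj)
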